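/- arXiv:2001.09940 — 4 statements merged into one kernel-verified Lean document; each statement's English description precedes it below -/
import Mathlib

section
/- Let p : E → B be an exponentiable arrow in a cartesian category C and let P_p = B_! ∘ p_* ∘ E* be the associated polynomial functor, with: leg_X : P_p X → B the structure arrow of p_* E* X; counit ε_X : P_p X ×_B E → X of the adjunction (− ×_B E) ⊣ (p_* E*, leg) evaluated at X; wk_X : X × B → P_p X defined as P_p(π₁) ∘ η_{X×B} (using the unit η of this adjunction and the isomorphism (X × B) ×_B E ≅ X × E); and proj := η_B : B → P_p E (using B ×_B E ≅ E). Then (P_p, leg, wk, proj, ε) is a polynomial functor for p, i.e. it satisfies axioms (P1)–(P4). -/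
open CategoryTheory CategoryTheory.Limits

universe v u

variable {C : Type u} [Category.{v} C]

/-- A *polynomial functor for `p`*: a pullback-preserving endofunctor `P : C ⥤ C` equipped
with a natural transformation `leg_X : P X ⟶ B`, a natural transformation
`wk_X : X × B ⟶ P X` over `B`, an arrow `proj : B ⟶ P E` over `B`, and a natural
transformation `subst_X : P X ×_B E ⟶ X`, satisfying axioms (P1)–(P4).  Morphisms between
pullbacks (such as `proj ×_B E`, `wk_X ×_B E`, the functorial action of `P(−) ×_B E` on a
morphism, and the pairing used in (P4)) are characterized by their compositions with the two
pullback projections. -/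
structure IsPolynomialFor [HasFiniteLimits C] {E B : C} (p : E ⟶ B)
    (P : C ⥤ C) (leg : ∀ X : C, P.obj X ⟶ B) (wk : ∀ X : C, X ⨯ B ⟶ P.obj X)
    (proj : B ⟶ P.obj E) (subst : ∀ X : C, pullback (leg X) p ⟶ X) : Prop where
  /-- `P` preserves pullbacks. -/
  preserves : PreservesLimitsOfShape WalkingCospan P
  /-- `leg` is a natural transformation `P ⟹ B`. -/
  leg_natural : ∀ (X Y : C) (f : X ⟶ Y), P.map f ≫ leg Y = leg X
  /-- `wk` is a natural transformation `(− × B) ⟹ P`. -/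
  wk_natural : ∀ (X Y : C) (f : X ⟶ Y), prod.map f (𝟙 B) ≫ wk Y = wk X ≫ P.map f
  /-- `wk_X : X × B ⟶ P X` is a morphism over `B`. -/
  wk_over : ∀ X : C, wk X ≫ leg X = (prod.snd : X ⨯ B ⟶ B)
  /-- `proj : B ⟶ P E` is a morphism over `B`. -/
  proj_over : proj ≫ leg E = 𝟙 B
  /-- `subst` is a natural transformation `(P(−) ×_B E) ⟹ 𝟭 C`: for `f : X ⟶ Y`, composing
  the induced morphism `P X ×_B E ⟶ P Y ×_B E` (characterized by the two displayed equations)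
  with `subst Y` equals `subst X ≫ f`. -/
  subst_natural : ∀ (X Y : C) (f : X ⟶ Y) (u : pullback (leg X) p ⟶ pullback (leg Y) p),
    u ≫ pullback.fst (leg Y) p = pullback.fst (leg X) p ≫ P.map f →
    u ≫ pullback.snd (leg Y) p = pullback.snd (leg X) p →
    u ≫ subst Y = subst X ≫ f
  /-- (P1): `P p ∘ proj = wk_B ∘ Δ_B`. -/
  P1 : proj ≫ P.map p = prod.lift (𝟙 B) (𝟙 B) ≫ wk B
  /-- (P2): `subst_E ∘ (proj ×_B E)` is the canonical isomorphism `B ×_B E ≅ E` (the second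
  pullback projection), where `proj ×_B E : B ×_B E ⟶ P E ×_B E` is characterized by the two
  displayed equations. -/
  P2 : ∀ u : pullback (𝟙 B) p ⟶ pullback (leg E) p,
    u ≫ pullback.fst (leg E) p = pullback.fst (𝟙 B) p ≫ proj →
    u ≫ pullback.snd (leg E) p = pullback.snd (𝟙 B) p →
    u ≫ subst E = pullback.snd (𝟙 B) p
  /-- (P3): `subst_X ∘ (wk_X ×_B E)` is the projection `(X × B) ×_B E ≅ X × E ⟶ X`, where
  `wk_X ×_B E : (X × B) ×_B E ⟶ P X ×_B E` is characterized by the displayed equations. -/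
  P3 : ∀ (X : C) (u : pullback (prod.snd : X ⨯ B ⟶ B) p ⟶ pullback (leg X) p),
    u ≫ pullback.fst (leg X) p = pullback.fst (prod.snd : X ⨯ B ⟶ B) p ≫ wk X →
    u ≫ pullback.snd (leg X) p = pullback.snd (prod.snd : X ⨯ B ⟶ B) p →
    u ≫ subst X = pullback.fst (prod.snd : X ⨯ B ⟶ B) p ≫ (prod.fst : X ⨯ B ⟶ X)
  /-- (P4): `P(subst_X) ∘ (wk_{PX} ∘ (id_{PX}, leg_X), proj ∘ leg_X) = id_{PX}`, where the
  pairing `P X ⟶ P (P X ×_B E)` is characterized, via the isomorphism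
  `P (P X ×_B E) ≅ P P X ×_{P B} P E` coming from `P` preserving pullbacks, by its composites
  with `P` applied to the two pullback projections. -/
  P4 : ∀ (X : C) (u : P.obj X ⟶ P.obj (pullback (leg X) p)),
    u ≫ P.map (pullback.fst (leg X) p) = prod.lift (𝟙 (P.obj X)) (leg X) ≫ wk (P.obj X) →
    u ≫ P.map (pullback.snd (leg X) p) = leg X ≫ proj →
    u ≫ P.map (subst X) = 𝟙 (P.obj X)

section Assoc

variable [HasFiniteLimits C] {E B : C} (p : E ⟶ B)
  (pstar : Over E ⥤ Over B) (adj : Over.pullback p ⊣ pstar)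

/-- The associated polynomial functor `P_p = B_! ∘ p_* ∘ E* : C ⥤ C`. -/
noncomputable def assocPoly : C ⥤ C := Over.star E ⋙ pstar ⋙ Over.forget B

/-- The structure arrow `leg_X : P_p X ⟶ B` of `p_* E* X ∈ C/B`. -/
noncomputable def assocLeg (X : C) : (assocPoly pstar).obj X ⟶ B :=
  ((Over.star E ⋙ pstar).obj X).hom

/-- The adjunction `(− ×_B E) ⊣ (p_* E*, leg)`, obtained by composing `p* ⊣ p_*` with
`E_! ⊣ E*`. -/
noncomputable def assocAdj :
    (Over.pullback p ⋙ Over.forget E) ⊣ (Over.star E ⋙ pstar) :=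
  adj.comp (Over.forgetAdjStar E)

/-- The counit `ε_X : P_p X ×_B E ⟶ X` of the adjunction `(− ×_B E) ⊣ (p_* E*, leg)`. -/
noncomputable def assocSubst (X : C) : pullback (assocLeg pstar X) p ⟶ X :=
  (assocAdj p pstar adj).counit.app X

/-- The underlying arrow `Y.left ⟶ P_p (Y ×_B E)` of the unit
`η_Y : Y ⟶ (p_* E*) (Y ×_B E)` of the adjunction `(− ×_B E) ⊣ (p_* E*, leg)`. -/
noncomputable def assocUnit (Y : Over B) :
    Y.left ⟶ (assocPoly pstar).obj (pullback Y.hom p) :=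
  ((assocAdj p pstar adj).unit.app Y).left

/-- `wk_X : X × B ⟶ P_p X`, defined as `P_p(π₁) ∘ η_{X×B}`, using the isomorphism
`(X × B) ×_B E ≅ X × E` (under which `P_p π₁` corresponds to `P_p` applied to the composite
`(X × B) ×_B E ⟶ X × B ⟶ X` of the first pullback projection and the first product
projection). -/
noncomputable def assocWk (X : C) : X ⨯ B ⟶ (assocPoly pstar).obj X :=
  assocUnit p pstar adj (Over.mk (prod.snd : X ⨯ B ⟶ B)) ≫
    (assocPoly pstar).map
      (pullback.fst (Over.mk (prod.snd : X ⨯ B ⟶ B)).hom p ≫ prod.fst)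

/-- `proj : B ⟶ P_p E`, defined as `η_B : B ⟶ P_p (B ×_B E)` followed by `P_p` applied to
the isomorphism `B ×_B E ≅ E` (the second pullback projection). -/
noncomputable def assocProj : B ⟶ (assocPoly pstar).obj E :=
  assocUnit p pstar adj (Over.mk (𝟙 B)) ≫
    (assocPoly pstar).map (pullback.snd (Over.mk (𝟙 B)).hom p)

end Assoc

/-!
Only the adjunction `(− ×_B E) ⊣ R` with `R = p_* E* : C ⥤ Over B` matters: writing `P` for the
underlying endofunctor of `R`, an arrow `A ⟶ P X` over `y : A ⟶ B` is the same as an arrow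
`A ×_B E ⟶ X`, its transpose. Under this correspondence `subst` is evaluation, `(a, y) ≫ wk` is
the transpose of `π₁ ≫ a`, and `y ≫ proj` is the transpose of `π₂ : A ×_B E ⟶ E`. In (P4) the
pairing is therefore the transpose of the identity of `P X ×_B E`, that is, the unit, and the
axiom becomes a triangle identity.
-/

lemma preservesPullbacks_comp_forget {D : Type*} [Category D] {B : C} {L : Over B ⥤ D}
    {R : D ⥤ Over B} (adj : L ⊣ R) :
    PreservesLimitsOfShape WalkingCospan (R ⋙ Over.forget B) := by
  have : PreservesLimitsOfShape WalkingCospan R :=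
    adj.rightAdjoint_preservesLimits.preservesLimitsOfShape
  infer_instance

lemma pullback_map_left_eq [HasPullbacks C] {E B : C} {p : E ⟶ B} {Y Y' : Over B} (g : Y ⟶ Y')
    {u : pullback Y.hom p ⟶ pullback Y'.hom p}
    (hfst : u ≫ pullback.fst Y'.hom p = pullback.fst Y.hom p ≫ g.left)
    (hsnd : u ≫ pullback.snd Y'.hom p = pullback.snd Y.hom p) :
    ((Over.pullback p).map g).left = u := by
  apply pullback.hom_ext
  · exact (pullback.lift_fst _ _ _).trans hfst.symm
  · exact (pullback.lift_snd _ _ _).trans hsnd.symm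

section Transpose

variable [HasPullbacks C] {E B : C} {p : E ⟶ B} {R : C ⥤ Over B}
  (adj : Over.pullback p ⋙ Over.forget E ⊣ R)

/-- The transpose `A ⟶ R X` of an arrow `A ×_B E ⟶ X` under `(− ×_B E) ⊣ R`, as an arrow of `C`.
The structure arrow `y : A ⟶ B` is an explicit argument, in place of an object of `Over B`, so that
the lemmas below rewrite composites in `C`. -/
noncomputable def overTranspose {A X : C} (y : A ⟶ B) (f : pullback y p ⟶ X) :
    A ⟶ (R.obj X).left :=
  (adj.homEquiv (Over.mk y) X f).left

lemma overTranspose_comp_hom {A X : C} (y : A ⟶ B) (f : pullback y p ⟶ X) :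
    overTranspose adj y f ≫ (R.obj X).hom = y :=
  Over.w (adj.homEquiv (Over.mk y) X f)

lemma overTranspose_comp_map {A X Y : C} (y : A ⟶ B) (f : pullback y p ⟶ X) (h : X ⟶ Y) :
    overTranspose adj y f ≫ (R.map h).left = overTranspose adj y (f ≫ h) :=
  congrArg Over.Hom.left (adj.homEquiv_naturality_right (X := Over.mk y) f h).symm

lemma comp_overTranspose {A A' X : C} {y : A ⟶ B} {y' : A' ⟶ B} (g : A ⟶ A')
    (w : g ≫ y' = y) (f : pullback y' p ⟶ X) :
    g ≫ overTranspose adj y' f =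
      overTranspose adj y
        (pullback.map y p y' p g (𝟙 E) (𝟙 B) (by simp [w]) (by simp) ≫ f) := by
  have map_homMk : ((Over.pullback p).map (Over.homMk g w : Over.mk y ⟶ Over.mk y')).left =
      pullback.map y p y' p g (𝟙 E) (𝟙 B) (by simp [w]) (by simp) :=
    pullback_map_left_eq (Y := Over.mk y) (Y' := Over.mk y') (Over.homMk g w)
      (pullback.lift_fst _ _ _) ((pullback.lift_snd _ _ _).trans (Category.comp_id _))
  rw [← map_homMk]
  exact congrArg Over.Hom.left
    (adj.homEquiv_naturality_left (Over.homMk g w : Over.mk y ⟶ Over.mk y') f).symm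

/-- The evaluation `subst_X : R X ×_B E ⟶ X`, the counit of `(− ×_B E) ⊣ R`. -/
noncomputable def overSubst (X : C) : pullback (R.obj X).hom p ⟶ X :=
  adj.counit.app X

lemma overTranspose_overSubst (X : C) :
    overTranspose adj (R.obj X).hom (overSubst adj X) = 𝟙 (R.obj X).left :=
  congrArg Over.Hom.left (adj.right_triangle_components X)

lemma comp_overSubst_eq_of_overTranspose {A X : C} {y : A ⟶ B} {f : pullback y p ⟶ X}
    {u : pullback y p ⟶ pullback (R.obj X).hom p}
    (hfst : u ≫ pullback.fst (R.obj X).hom p = pullback.fst y p ≫ overTranspose adj y f)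
    (hsnd : u ≫ pullback.snd (R.obj X).hom p = pullback.snd y p) :
    u ≫ overSubst adj X = f := by
  rw [← pullback_map_left_eq (adj.homEquiv (Over.mk y) X f) hfst hsnd]
  exact (adj.homEquiv_counit ..).symm.trans ((adj.homEquiv (Over.mk y) X).symm_apply_apply f)

lemma overSubst_natural {X Y : C} (f : X ⟶ Y)
    {u : pullback (R.obj X).hom p ⟶ pullback (R.obj Y).hom p}
    (hfst : u ≫ pullback.fst (R.obj Y).hom p = pullback.fst (R.obj X).hom p ≫ (R.map f).left)
    (hsnd : u ≫ pullback.snd (R.obj Y).hom p = pullback.snd (R.obj X).hom p) :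
    u ≫ overSubst adj Y = overSubst adj X ≫ f := by
  have map_eq : (R.map f).left = overTranspose adj (R.obj X).hom (overSubst adj X ≫ f) := by
    rw [← overTranspose_comp_map, overTranspose_overSubst, Category.id_comp]
  exact comp_overSubst_eq_of_overTranspose adj (map_eq ▸ hfst) hsnd

/-- The generic arrow `proj : B ⟶ R E`, transpose of the projection `B ×_B E ⟶ E`. -/
noncomputable def overProj : B ⟶ (R.obj E).left :=
  overTranspose adj (𝟙 B) (pullback.snd (𝟙 B) p)

lemma comp_overProj {A : C} (y : A ⟶ B) :
    y ≫ overProj adj = overTranspose adj y (pullback.snd y p) := by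
  rw [overProj, comp_overTranspose adj y (Category.comp_id y), pullback.lift_snd,
    Category.comp_id]

variable [HasBinaryProducts C]

/-- The weakening `wk_X : X × B ⟶ R X`, transpose of the projection `(X × B) ×_B E ⟶ X`. -/
noncomputable def overWk (X : C) : X ⨯ B ⟶ (R.obj X).left :=
  overTranspose adj prod.snd (pullback.fst prod.snd p ≫ prod.fst)

lemma lift_comp_overWk {A X : C} (a : A ⟶ X) (y : A ⟶ B) :
    prod.lift a y ≫ overWk adj X = overTranspose adj y (pullback.fst y p ≫ a) := by
  rw [overWk, comp_overTranspose adj _ (prod.lift_snd a y), pullback.lift_fst_assoc,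
    Category.assoc, prod.lift_fst]

lemma overWk_natural {X Y : C} (f : X ⟶ Y) :
    prod.map f (𝟙 B) ≫ overWk adj Y = overWk adj X ≫ (R.map f).left := by
  rw [← prod.lift_fst_comp_snd_comp, Category.comp_id, lift_comp_overWk, overWk,
    overTranspose_comp_map, Category.assoc]

lemma overProj_comp_map :
    overProj adj ≫ (R.map p).left = prod.lift (𝟙 B) (𝟙 B) ≫ overWk adj B := by
  rw [lift_comp_overWk, overProj, overTranspose_comp_map, pullback.condition]

lemma eq_overTranspose_id_of_comp_map {X : C}
    {u : (R.obj X).left ⟶ (R.obj (pullback (R.obj X).hom p)).left}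
    (hfst : u ≫ (R.map (pullback.fst (R.obj X).hom p)).left =
      prod.lift (𝟙 _) (R.obj X).hom ≫ overWk adj (R.obj X).left)
    (hsnd : u ≫ (R.map (pullback.snd (R.obj X).hom p)).left = (R.obj X).hom ≫ overProj adj) :
    u = overTranspose adj (R.obj X).hom (𝟙 _) := by
  have := preservesPullbacks_comp_forget adj
  apply ((IsPullback.of_hasPullback (R.obj X).hom p).map (R ⋙ Over.forget B)).hom_ext
  · refine hfst.trans (Eq.trans ?_ (overTranspose_comp_map adj _ _ _).symm)
    rw [lift_comp_overWk, Category.comp_id, Category.id_comp]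
  · refine hsnd.trans (Eq.trans ?_ (overTranspose_comp_map adj _ _ _).symm)
    rw [comp_overProj, Category.id_comp]

lemma pairing_comp_map_overSubst {X : C}
    {u : (R.obj X).left ⟶ (R.obj (pullback (R.obj X).hom p)).left}
    (hfst : u ≫ (R.map (pullback.fst (R.obj X).hom p)).left =
      prod.lift (𝟙 _) (R.obj X).hom ≫ overWk adj (R.obj X).left)
    (hsnd : u ≫ (R.map (pullback.snd (R.obj X).hom p)).left = (R.obj X).hom ≫ overProj adj) :
    u ≫ (R.map (overSubst adj X)).left = 𝟙 (R.obj X).left := by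
  rw [eq_overTranspose_id_of_comp_map adj hfst hsnd]
  refine (overTranspose_comp_map adj _ _ _).trans ?_
  rw [Category.id_comp, overTranspose_overSubst]

end Transpose

theorem assocPoly_isPolynomialFor_general [HasFiniteLimits C] {E B : C} {p : E ⟶ B}
    {R : C ⥤ Over B} (adj : Over.pullback p ⋙ Over.forget E ⊣ R) :
    IsPolynomialFor p (R ⋙ Over.forget B) (fun X => (R.obj X).hom) (overWk adj) (overProj adj)
      (overSubst adj) where
  preserves := preservesPullbacks_comp_forget adj
  leg_natural _ _ f := Over.w (R.map f)
  wk_natural _ _ f := overWk_natural adj f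
  wk_over _ := overTranspose_comp_hom adj _ _
  proj_over := overTranspose_comp_hom adj _ _
  subst_natural _ _ f _ hfst hsnd := overSubst_natural adj f hfst hsnd
  P1 := overProj_comp_map adj
  P2 _ hfst hsnd := comp_overSubst_eq_of_overTranspose adj hfst hsnd
  P3 _ _ hfst hsnd := comp_overSubst_eq_of_overTranspose adj hfst hsnd
  P4 _ _ hfst hsnd := pairing_comp_map_overSubst adj hfst hsnd

/-- Let `p : E ⟶ B` be an exponentiable arrow in a cartesian category `C`
(witnessed by `p* ⊣ p_*`), and let `P_p = B_! ∘ p_* ∘ E*` be the associated polynomial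
functor, with `leg` the structure arrow of `p_* E* X`, `ε` the counit of the adjunction
`(− ×_B E) ⊣ (p_* E*, leg)`, and `wk`, `proj` constructed from the unit `η` of this adjunction
as above.  Then `(P_p, leg, wk, proj, ε)` is a polynomial functor for `p`, i.e. it satisfies
axioms (P1)–(P4). -/
theorem assocPoly_isPolynomialFor {C : Type u} [Category.{v} C] [HasFiniteLimits C]
    {E B : C} (p : E ⟶ B) (pstar : Over E ⥤ Over B) (adj : Over.pullback p ⊣ pstar) :
    IsPolynomialFor p (assocPoly pstar) (assocLeg pstar) (assocWk p pstar adj)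
      (assocProj p pstar adj) (assocSubst p pstar adj) :=
  -- `homEquiv f` unfolds to `η ≫ R.map f`, so `assocWk` and `assocProj` are transposes by `rfl`.
  assocPoly_isPolynomialFor_general (assocAdj p pstar adj)
end

section
/- Let C be a cartesian category, p : E → B an arrow in C, P : C → C a pullback-preserving endofunctor, leg_X : PX → B a natural transformation, and subst_X : PX ×_B E → X a natural transformation. Then there is a bijection between: (i) the set of natural transformations η_Y : Y → P(Y ×_B E) (for Y ∈ C/B) making the functor (P, leg) : C → C/B a right adjoint of (− ×_B E) : C/B → C with unit η and counit subst; and (ii) the set of pairs (wk, proj), with wk_X : X × B → PX a natural transformation over B and proj : B → PE an arrow over B, making (P, leg, wk, proj, subst) a polynomial functor for p. The bijection sends η to the pair given by wk_X = P(π₁) ∘ η_{X×B} (via (X × B) ×_B E ≅ X × E) and proj = η_B (via B ×_B E ≅ E). -/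
open CategoryTheory CategoryTheory.Limits

universe v u

variable {C : Type u} [Category.{v} C]

/-- The functor `(P, leg) : C ⥤ C/B` determined by an endofunctor `P : C ⥤ C` and a natural
transformation `leg_X : P X ⟶ B`. -/
@[simps]
def legFunctor {B : C} (P : C ⥤ C) (leg : ∀ X : C, P.obj X ⟶ B)
    (hleg : ∀ (X Y : C) (f : X ⟶ Y), P.map f ≫ leg Y = leg X) : C ⥤ Over B where
  obj X := Over.mk (leg X)
  map {X Y} f := Over.homMk (P.map f) (hleg X Y f)

/-- The property that a family `η_Y : Y ⟶ P (Y ×_B E)` (for `Y ∈ C/B`) is a natural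
transformation making `(P, leg) : C ⥤ C/B` a right adjoint of `(− ×_B E) : C/B ⥤ C` with
unit `η` and counit `subst`: each `η_Y` is a morphism over `B`, `η` is natural in `Y`, and
the two triangle identities hold.  In the second triangle identity, the morphism
`η_Y ×_B E : Y ×_B E ⟶ P (Y ×_B E) ×_B E` is characterized by its compositions with the two
pullback projections. -/
structure IsAdjointUnit [HasFiniteLimits C] {E B : C} (p : E ⟶ B)
    (P : C ⥤ C) (leg : ∀ X : C, P.obj X ⟶ B) (subst : ∀ X : C, pullback (leg X) p ⟶ X)
    (η : ∀ Y : Over B, Y.left ⟶ P.obj (pullback Y.hom p)) : Prop where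
  /-- Each `η_Y` is a morphism `Y ⟶ (P (Y ×_B E), leg)` in `C/B`. -/
  η_over : ∀ Y : Over B, η Y ≫ leg (pullback Y.hom p) = Y.hom
  /-- `η` is natural in `Y ∈ C/B`. -/
  natural : ∀ (Y Z : Over B) (f : Y ⟶ Z),
    f.left ≫ η Z = η Y ≫ P.map ((Over.pullback p ⋙ Over.forget E).map f)
  /-- First triangle identity: `P (subst_X) ∘ η_{(P X, leg_X)} = id_{P X}`. -/
  triangle₁ : ∀ X : C, η (Over.mk (leg X)) ≫ P.map (subst X) = 𝟙 (P.obj X)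
  /-- Second triangle identity: `subst_{Y ×_B E} ∘ (η_Y ×_B E) = id_{Y ×_B E}`. -/
  triangle₂ : ∀ (Y : Over B)
    (u : pullback Y.hom p ⟶ pullback (leg (pullback Y.hom p)) p),
    u ≫ pullback.fst (leg (pullback Y.hom p)) p = pullback.fst Y.hom p ≫ η Y →
    u ≫ pullback.snd (leg (pullback Y.hom p)) p = pullback.snd Y.hom p →
    u ≫ subst (pullback Y.hom p) = 𝟙 (pullback Y.hom p)

/-!
Write `⟨1, y⟩ : Y ⟶ Y × B` for the graph of `y : Y ⟶ B`. Naturality of a unit `η` along the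
morphisms `⟨1, y⟩ : y ⟶ (Y × B ⟶ B)` and `y : y ⟶ id_B` of `C/B` shows that the two components of
`η_y : Y ⟶ P (Y ×_B E) ≅ P Y ×_{P B} P E` are `wk_Y ∘ ⟨1, y⟩` and `proj ∘ y`, so `(wk, proj)`
determines `η`. Conversely (P1) says that these two maps agree over `P B` and hence define `η_y`.
Transposing along `subst`, the second triangle identity for `η` is tested on the two projections
of `Y ×_B E`, where it becomes (P3) and (P2); the first triangle identity is (P4).
-/

section BaseChange

variable [HasPullbacks C] {E B Y Z W : C} {y : Y ⟶ B} {z : Z ⟶ B} {w : W ⟶ B}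

/-- The morphism `f ×_B E : Y ×_B E ⟶ Z ×_B E` induced by a morphism `f : Y ⟶ Z` over `B`. -/
noncomputable def baseChangeMap (p : E ⟶ B) (f : Y ⟶ Z) (hf : f ≫ z = y) :
    pullback y p ⟶ pullback z p :=
  pullback.lift (pullback.fst y p ≫ f) (pullback.snd y p)
    (by rw [Category.assoc, hf, pullback.condition])

variable {p : E ⟶ B}

theorem baseChangeMap_fst (f : Y ⟶ Z) (hf : f ≫ z = y) :
    baseChangeMap p f hf ≫ pullback.fst z p = pullback.fst y p ≫ f :=
  pullback.lift_fst _ _ _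

theorem baseChangeMap_snd (f : Y ⟶ Z) (hf : f ≫ z = y) :
    baseChangeMap p f hf ≫ pullback.snd z p = pullback.snd y p :=
  pullback.lift_snd _ _ _

theorem eq_baseChangeMap {f : Y ⟶ Z} (hf : f ≫ z = y) {u : pullback y p ⟶ pullback z p}
    (h₁ : u ≫ pullback.fst z p = pullback.fst y p ≫ f)
    (h₂ : u ≫ pullback.snd z p = pullback.snd y p) : u = baseChangeMap p f hf :=
  pullback.hom_ext (h₁.trans (baseChangeMap_fst f hf).symm)
    (h₂.trans (baseChangeMap_snd f hf).symm)

theorem baseChangeMap_comp (f : Y ⟶ Z) (hf : f ≫ z = y) (g : Z ⟶ W) (hg : g ≫ w = z) :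
    baseChangeMap p (f ≫ g) (by rw [Category.assoc, hg, hf]) =
      baseChangeMap p f hf ≫ baseChangeMap p g hg := by
  symm
  apply eq_baseChangeMap
  · rw [Category.assoc, baseChangeMap_fst, reassoc_of% (baseChangeMap_fst (p := p) f hf)]
  · rw [Category.assoc, baseChangeMap_snd, baseChangeMap_snd]

theorem pullback_forget_map_eq_baseChangeMap (p : E ⟶ B) {Y Z : Over B} (f : Y ⟶ Z) :
    (Over.pullback p ⋙ Over.forget E).map f = baseChangeMap p f.left (Over.w f) :=
  rfl

end BaseChange

section Transpose

variable [HasPullbacks C] {E B : C} {p : E ⟶ B} {P : C ⥤ C} {leg : ∀ X : C, P.obj X ⟶ B}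

/-- The transpose `subst_X ∘ (f ×_B E) : Y ×_B E ⟶ X` of a morphism `f : Y ⟶ P X` over `B`, with
`subst` in the role of the counit of `(− ×_B E) ⊣ (P, leg)`. -/
noncomputable def transpose (subst : ∀ X : C, pullback (leg X) p ⟶ X) {X Y : C} {y : Y ⟶ B}
    (f : Y ⟶ P.obj X) (hf : f ≫ leg X = y) : pullback y p ⟶ X :=
  baseChangeMap p f hf ≫ subst X

variable {subst : ∀ X : C, pullback (leg X) p ⟶ X}

theorem comp_subst_eq_transpose {X Y : C} {y : Y ⟶ B} {f : Y ⟶ P.obj X} (hf : f ≫ leg X = y)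
    {u : pullback y p ⟶ pullback (leg X) p}
    (h₁ : u ≫ pullback.fst (leg X) p = pullback.fst y p ≫ f)
    (h₂ : u ≫ pullback.snd (leg X) p = pullback.snd y p) :
    u ≫ subst X = transpose subst f hf := by
  rw [eq_baseChangeMap hf h₁ h₂, transpose]

theorem comp_transpose {X Y Z : C} {y : Y ⟶ B} {z : Z ⟶ B} (a : Z ⟶ Y) (ha : a ≫ y = z)
    (f : Y ⟶ P.obj X) (hf : f ≫ leg X = y) :
    transpose subst (a ≫ f) (by rw [Category.assoc, hf, ha]) =
      baseChangeMap p a ha ≫ transpose subst f hf := by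
  rw [transpose, baseChangeMap_comp a ha f hf, Category.assoc, transpose]

theorem transpose_comp_map {X X' Y : C} {y : Y ⟶ B} (f : Y ⟶ P.obj X) (hf : f ≫ leg X = y)
    (g : X ⟶ X') (hleg : P.map g ≫ leg X' = leg X)
    (hsubst : baseChangeMap p (P.map g) hleg ≫ subst X' = subst X ≫ g) :
    transpose subst (f ≫ P.map g) (by rw [Category.assoc, hleg, hf]) =
      transpose subst f hf ≫ g := by
  rw [transpose, baseChangeMap_comp f hf (P.map g) hleg, Category.assoc, hsubst, transpose,
    Category.assoc]

end Transpose

variable [HasFiniteLimits C] {E B : C} {p : E ⟶ B} {P : C ⥤ C}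
  {leg : ∀ X : C, P.obj X ⟶ B} {subst : ∀ X : C, pullback (leg X) p ⟶ X}

/-- The weakening `wk_X = P(π₁) ∘ η_{X × B}` of a unit `η`, where `π₁` is the projection
`(X × B) ×_B E ≅ X × E ⟶ X`. -/
noncomputable def weakeningOfUnit (η : ∀ Y : Over B, Y.left ⟶ P.obj (pullback Y.hom p)) (X : C) :
    X ⨯ B ⟶ P.obj X :=
  η (Over.mk (prod.snd : X ⨯ B ⟶ B)) ≫
    P.map (pullback.fst (prod.snd : X ⨯ B ⟶ B) p ≫ prod.fst)

/-- The arrow `proj = η_B : B ⟶ P E` of a unit `η`, via the isomorphism `B ×_B E ≅ E`. -/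
noncomputable def projOfUnit (η : ∀ Y : Over B, Y.left ⟶ P.obj (pullback Y.hom p)) :
    B ⟶ P.obj E :=
  η (Over.mk (𝟙 B)) ≫ P.map (pullback.snd (𝟙 B) p)

namespace IsAdjointUnit

variable {η : ∀ Y : Over B, Y.left ⟶ P.obj (pullback Y.hom p)}

theorem comp_unit (h : IsAdjointUnit p P leg subst η) {Y Z : C} {y : Y ⟶ B} {z : Z ⟶ B}
    (f : Y ⟶ Z) (hf : f ≫ z = y) :
    f ≫ η (Over.mk z) = η (Over.mk y) ≫ P.map (baseChangeMap (y := y) (z := z) p f hf) :=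
  h.natural (Over.mk y) (Over.mk z) (Over.homMk f hf)

theorem unit_comp_map_fst (h : IsAdjointUnit p P leg subst η) {Y : C} (y : Y ⟶ B) :
    η (Over.mk y) ≫ P.map (pullback.fst y p) =
      prod.lift (𝟙 Y) y ≫ weakeningOfUnit η Y := by
  have graph_over : prod.lift (𝟙 Y) y ≫ prod.snd = y := prod.lift_snd _ _
  rw [weakeningOfUnit, reassoc_of% (h.comp_unit _ graph_over), ← P.map_comp,
    reassoc_of% (baseChangeMap_fst (p := p) _ graph_over), prod.lift_fst, Category.comp_id]

theorem unit_comp_map_snd (h : IsAdjointUnit p P leg subst η) {Y : C} (y : Y ⟶ B) :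
    η (Over.mk y) ≫ P.map (pullback.snd y p) = y ≫ projOfUnit η := by
  have y_over : y ≫ 𝟙 B = y := Category.comp_id y
  rw [projOfUnit, reassoc_of% (h.comp_unit y y_over), ← P.map_comp, baseChangeMap_snd]

theorem transpose_unit (h : IsAdjointUnit p P leg subst η) (Y : Over B) :
    transpose subst (η Y) (h.η_over Y) = 𝟙 (pullback Y.hom p) :=
  h.triangle₂ Y _ (baseChangeMap_fst _ _) (baseChangeMap_snd _ _)

theorem weakeningOfUnit_natural (h : IsAdjointUnit p P leg subst η) {X Y : C} (f : X ⟶ Y) :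
    prod.map f (𝟙 B) ≫ weakeningOfUnit η Y = weakeningOfUnit η X ≫ P.map f := by
  have map_over : prod.map f (𝟙 B) ≫ prod.snd = prod.snd := by
    rw [prod.map_snd, Category.comp_id]
  rw [weakeningOfUnit, weakeningOfUnit, reassoc_of% (h.comp_unit _ map_over), ← P.map_comp,
    reassoc_of% (baseChangeMap_fst (p := p) _ map_over), prod.map_fst, Category.assoc,
    ← P.map_comp, Category.assoc]

theorem projOfUnit_comp_map (h : IsAdjointUnit p P leg subst η) :
    projOfUnit η ≫ P.map p = prod.lift (𝟙 B) (𝟙 B) ≫ weakeningOfUnit η B := by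
  rw [← h.unit_comp_map_fst, projOfUnit, Category.assoc, ← P.map_comp, ← pullback.condition,
    Category.comp_id]

theorem transpose_unit_comp_map (h : IsAdjointUnit p P leg subst η) {X : C} (Y : Over B)
    (g : pullback Y.hom p ⟶ X) (hleg : P.map g ≫ leg X = leg (pullback Y.hom p))
    (hsubst : baseChangeMap p (P.map g) hleg ≫ subst X = subst (pullback Y.hom p) ≫ g) :
    transpose subst (η Y ≫ P.map g) (by rw [Category.assoc, hleg, h.η_over]) = g := by
  rw [transpose_comp_map _ (h.η_over Y) g hleg hsubst, h.transpose_unit, Category.id_comp]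

theorem isPolynomialFor (h : IsAdjointUnit p P leg subst η)
    (hP : PreservesLimitsOfShape WalkingCospan P)
    (hleg : ∀ (X Y : C) (f : X ⟶ Y), P.map f ≫ leg Y = leg X)
    (hsubst : ∀ (X Y : C) (f : X ⟶ Y) (u : pullback (leg X) p ⟶ pullback (leg Y) p),
      u ≫ pullback.fst (leg Y) p = pullback.fst (leg X) p ≫ P.map f →
      u ≫ pullback.snd (leg Y) p = pullback.snd (leg X) p →
      u ≫ subst Y = subst X ≫ f) :
    IsPolynomialFor p P leg (weakeningOfUnit η) (projOfUnit η) subst where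
  preserves := hP
  leg_natural := hleg
  wk_natural _ _ f := h.weakeningOfUnit_natural f
  wk_over X := by rw [weakeningOfUnit, Category.assoc, hleg]; exact h.η_over _
  proj_over := by rw [projOfUnit, Category.assoc, hleg]; exact h.η_over _
  subst_natural := hsubst
  P1 := h.projOfUnit_comp_map
  P2 _ h₁ h₂ := (comp_subst_eq_transpose _ h₁ h₂).trans <|
    h.transpose_unit_comp_map (Over.mk (𝟙 B)) _ (hleg _ _ _)
      (hsubst _ _ _ _ (baseChangeMap_fst _ _) (baseChangeMap_snd _ _))
  P3 _ _ h₁ h₂ := (comp_subst_eq_transpose _ h₁ h₂).trans <|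
    h.transpose_unit_comp_map (Over.mk prod.snd) _ (hleg _ _ _)
      (hsubst _ _ _ _ (baseChangeMap_fst _ _) (baseChangeMap_snd _ _))
  P4 X u h₁ h₂ := by
    have hu : u = η (Over.mk (leg X)) :=
      ((IsPullback.of_hasPullback (leg X) p).map P).hom_ext
        (h₁.trans (h.unit_comp_map_fst (leg X)).symm)
        (h₂.trans (h.unit_comp_map_snd (leg X)).symm)
    rw [hu, h.triangle₁]

end IsAdjointUnit

namespace IsPolynomialFor

variable {wk : ∀ X : C, X ⨯ B ⟶ P.obj X} {proj : B ⟶ P.obj E}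

theorem isPullback_map (h : IsPolynomialFor p P leg wk proj subst) {Y : C} (y : Y ⟶ B) :
    IsPullback (P.map (pullback.fst y p)) (P.map (pullback.snd y p)) (P.map y) (P.map p) :=
  haveI := h.preserves
  (IsPullback.of_hasPullback y p).map P

theorem lift_comp_wk_comp_map (h : IsPolynomialFor p P leg wk proj subst) {X Y Z : C}
    (f : Z ⟶ X) (b : Z ⟶ B) (g : X ⟶ Y) :
    prod.lift f b ≫ wk X ≫ P.map g = prod.lift (f ≫ g) b ≫ wk Y := by
  rw [← h.wk_natural, prod.lift_map_assoc, Category.comp_id]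

theorem graph_comp_wk_comp_map (h : IsPolynomialFor p P leg wk proj subst) {Y : C} (y : Y ⟶ B) :
    (prod.lift (𝟙 Y) y ≫ wk Y) ≫ P.map y = (y ≫ proj) ≫ P.map p := by
  rw [Category.assoc, h.lift_comp_wk_comp_map, Category.id_comp, Category.assoc, h.P1,
    prod.comp_lift_assoc, Category.comp_id]

/-- The unit `η_y : Y ⟶ P (Y ×_B E) ≅ P Y ×_{P B} P E` of a polynomial functor, with components
`wk_Y ∘ ⟨1, y⟩` and `proj ∘ y`. -/
noncomputable def unit (h : IsPolynomialFor p P leg wk proj subst) (Y : Over B) :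
    Y.left ⟶ P.obj (pullback Y.hom p) :=
  (h.isPullback_map Y.hom).lift (prod.lift (𝟙 Y.left) Y.hom ≫ wk Y.left) (Y.hom ≫ proj)
    (h.graph_comp_wk_comp_map Y.hom)

theorem unit_comp_map_fst (h : IsPolynomialFor p P leg wk proj subst) (Y : Over B) :
    h.unit Y ≫ P.map (pullback.fst Y.hom p) = prod.lift (𝟙 Y.left) Y.hom ≫ wk Y.left :=
  (h.isPullback_map Y.hom).lift_fst _ _ _

theorem unit_comp_map_snd (h : IsPolynomialFor p P leg wk proj subst) (Y : Over B) :
    h.unit Y ≫ P.map (pullback.snd Y.hom p) = Y.hom ≫ proj :=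
  (h.isPullback_map Y.hom).lift_snd _ _ _

theorem unit_over (h : IsPolynomialFor p P leg wk proj subst) (Y : Over B) :
    h.unit Y ≫ leg (pullback Y.hom p) = Y.hom := by
  rw [← h.leg_natural _ _ (pullback.fst Y.hom p), reassoc_of% (h.unit_comp_map_fst Y), h.wk_over,
    prod.lift_snd]

theorem unit_natural (h : IsPolynomialFor p P leg wk proj subst) {Y Z : Over B} (f : Y ⟶ Z) :
    f.left ≫ h.unit Z = h.unit Y ≫ P.map (baseChangeMap p f.left (Over.w f)) := by
  apply (h.isPullback_map Z.hom).hom_ext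
  · calc (f.left ≫ h.unit Z) ≫ P.map (pullback.fst Z.hom p)
        = prod.lift f.left Y.hom ≫ wk Z.left := by
          rw [Category.assoc, h.unit_comp_map_fst, prod.comp_lift_assoc, Category.comp_id, Over.w]
      _ = h.unit Y ≫ P.map (pullback.fst Y.hom p) ≫ P.map f.left := by
          rw [reassoc_of% (h.unit_comp_map_fst Y), h.lift_comp_wk_comp_map, Category.id_comp]
      _ = (h.unit Y ≫ P.map (baseChangeMap p f.left (Over.w f))) ≫
            P.map (pullback.fst Z.hom p) := by
          rw [Category.assoc, ← P.map_comp, ← P.map_comp, baseChangeMap_fst]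
  · rw [Category.assoc, Category.assoc, h.unit_comp_map_snd, ← P.map_comp, baseChangeMap_snd,
      h.unit_comp_map_snd, Over.w_assoc]

theorem baseChangeMap_comp_subst (h : IsPolynomialFor p P leg wk proj subst) {X Y : C}
    (f : X ⟶ Y) :
    baseChangeMap p (P.map f) (h.leg_natural X Y f) ≫ subst Y = subst X ≫ f :=
  h.subst_natural X Y f _ (baseChangeMap_fst _ _) (baseChangeMap_snd _ _)

theorem transpose_wk (h : IsPolynomialFor p P leg wk proj subst) (X : C) :
    transpose subst (wk X) (h.wk_over X) =
      pullback.fst (prod.snd : X ⨯ B ⟶ B) p ≫ prod.fst :=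
  h.P3 X _ (baseChangeMap_fst _ _) (baseChangeMap_snd _ _)

theorem transpose_proj (h : IsPolynomialFor p P leg wk proj subst) :
    transpose subst proj h.proj_over = pullback.snd (𝟙 B) p :=
  h.P2 _ (baseChangeMap_fst _ _) (baseChangeMap_snd _ _)

theorem transpose_unit_comp_fst (h : IsPolynomialFor p P leg wk proj subst) (Y : Over B) :
    transpose subst (h.unit Y) (h.unit_over Y) ≫ pullback.fst Y.hom p = pullback.fst Y.hom p := by
  have graph_over : prod.lift (𝟙 Y.left) Y.hom ≫ prod.snd = Y.hom := prod.lift_snd _ _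
  rw [← transpose_comp_map _ _ _ (h.leg_natural _ _ _) (h.baseChangeMap_comp_subst _)]
  simp only [h.unit_comp_map_fst]
  rw [comp_transpose _ graph_over _ (h.wk_over Y.left), h.transpose_wk,
    reassoc_of% (baseChangeMap_fst (p := p) _ graph_over), prod.lift_fst, Category.comp_id]

theorem transpose_unit_comp_snd (h : IsPolynomialFor p P leg wk proj subst) (Y : Over B) :
    transpose subst (h.unit Y) (h.unit_over Y) ≫ pullback.snd Y.hom p = pullback.snd Y.hom p := by
  rw [← transpose_comp_map _ _ _ (h.leg_natural _ _ _) (h.baseChangeMap_comp_subst _)]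
  simp only [h.unit_comp_map_snd]
  rw [comp_transpose _ (Category.comp_id Y.hom) _ h.proj_over, h.transpose_proj, baseChangeMap_snd]

theorem transpose_unit (h : IsPolynomialFor p P leg wk proj subst) (Y : Over B) :
    transpose subst (h.unit Y) (h.unit_over Y) = 𝟙 (pullback Y.hom p) :=
  pullback.hom_ext
    ((h.transpose_unit_comp_fst Y).trans (Category.id_comp _).symm)
    ((h.transpose_unit_comp_snd Y).trans (Category.id_comp _).symm)

theorem isAdjointUnit (h : IsPolynomialFor p P leg wk proj subst) :
    IsAdjointUnit p P leg subst h.unit where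
  η_over := h.unit_over
  natural Y Z f := by
    rw [pullback_forget_map_eq_baseChangeMap]
    exact h.unit_natural f
  triangle₁ X := h.P4 X _ (h.unit_comp_map_fst _) (h.unit_comp_map_snd _)
  triangle₂ Y _ h₁ h₂ :=
    (comp_subst_eq_transpose (h.unit_over Y) h₁ h₂).trans (h.transpose_unit Y)

theorem weakeningOfUnit_unit (h : IsPolynomialFor p P leg wk proj subst) :
    weakeningOfUnit h.unit = wk := by
  funext X
  have unit_fst := h.unit_comp_map_fst (Over.mk (prod.snd : X ⨯ B ⟶ B))
  dsimp only [Over.mk_left, Over.mk_hom] at unit_fst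
  rw [weakeningOfUnit, P.map_comp, reassoc_of% unit_fst, h.lift_comp_wk_comp_map,
    Category.id_comp, prod.lift_fst_snd, Category.id_comp]

theorem projOfUnit_unit (h : IsPolynomialFor p P leg wk proj subst) :
    projOfUnit h.unit = proj :=
  (h.unit_comp_map_snd (Over.mk (𝟙 B))).trans (Category.id_comp proj)

theorem unit_weakeningOfUnit_projOfUnit {η : ∀ Y : Over B, Y.left ⟶ P.obj (pullback Y.hom p)}
    (h : IsPolynomialFor p P leg (weakeningOfUnit η) (projOfUnit η) subst)
    (hη : IsAdjointUnit p P leg subst η) : h.unit = η := by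
  funext Y
  exact (h.isPullback_map Y.hom).hom_ext
    ((h.unit_comp_map_fst Y).trans (hη.unit_comp_map_fst Y.hom).symm)
    ((h.unit_comp_map_snd Y).trans (hη.unit_comp_map_snd Y.hom).symm)

end IsPolynomialFor

/-- Let `C` be a cartesian category, `p : E ⟶ B` an arrow in `C`,
`P : C ⥤ C` a pullback-preserving endofunctor, `leg_X : P X ⟶ B` a natural transformation,
and `subst_X : P X ×_B E ⟶ X` a natural transformation.  Then there is a bijection between:
(i) the set of natural transformations `η_Y : Y ⟶ P (Y ×_B E)` (for `Y ∈ C/B`) making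
`(P, leg) : C ⥤ C/B` a right adjoint of `(− ×_B E) : C/B ⥤ C` with unit `η` and counit
`subst`; and (ii) the set of pairs `(wk, proj)` of a natural transformation
`wk_X : X × B ⟶ P X` over `B` and an arrow `proj : B ⟶ P E` over `B` making
`(P, leg, wk, proj, subst)` a polynomial functor for `p`.  The bijection sends `η` to the pair
given by `wk_X = P(π₁) ∘ η_{X×B}` (via `(X × B) ×_B E ≅ X × E`) and `proj = η_B` (via
`B ×_B E ≅ E`). -/
theorem adjointUnit_equiv_polynomialStructure
    {C : Type u} [Category.{v} C] [HasFiniteLimits C] {E B : C} (p : E ⟶ B)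
    (P : C ⥤ C) (hP : PreservesLimitsOfShape WalkingCospan P)
    (leg : ∀ X : C, P.obj X ⟶ B)
    (hleg : ∀ (X Y : C) (f : X ⟶ Y), P.map f ≫ leg Y = leg X)
    (subst : ∀ X : C, pullback (leg X) p ⟶ X)
    (hsubst : ∀ (X Y : C) (f : X ⟶ Y) (u : pullback (leg X) p ⟶ pullback (leg Y) p),
      u ≫ pullback.fst (leg Y) p = pullback.fst (leg X) p ≫ P.map f →
      u ≫ pullback.snd (leg Y) p = pullback.snd (leg X) p →
      u ≫ subst Y = subst X ≫ f) :
    ∃ e : {η : ∀ Y : Over B, Y.left ⟶ P.obj (pullback Y.hom p) //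
            IsAdjointUnit p P leg subst η} ≃
          {wp : (∀ X : C, X ⨯ B ⟶ P.obj X) × (B ⟶ P.obj E) //
            IsPolynomialFor p P leg wp.1 wp.2 subst},
      ∀ η, (e η).val =
        ⟨fun X : C => η.val (Over.mk (prod.snd : X ⨯ B ⟶ B)) ≫
            P.map (pullback.fst (Over.mk (prod.snd : X ⨯ B ⟶ B)).hom p ≫ prod.fst),
          η.val (Over.mk (𝟙 B)) ≫ P.map (pullback.snd (Over.mk (𝟙 B)).hom p)⟩ := by
  have toPolynomial (η : {η // IsAdjointUnit p P leg subst η}) :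
      IsPolynomialFor p P leg (weakeningOfUnit η.1) (projOfUnit η.1) subst :=
    η.2.isPolynomialFor hP hleg hsubst
  exact ⟨
    { toFun η := ⟨(weakeningOfUnit η.1, projOfUnit η.1), toPolynomial η⟩
      invFun wp := ⟨wp.2.unit, wp.2.isAdjointUnit⟩
      left_inv η := Subtype.ext ((toPolynomial η).unit_weakeningOfUnit_projOfUnit η.2)
      right_inv wp := Subtype.ext
        (Prod.ext wp.2.weakeningOfUnit_unit wp.2.projOfUnit_unit) },
    fun _ => rfl⟩
end

section
/- For an arrow p : E → B in a cartesian category C, the following are equivalent: (1) p is exponentiable; (2) there exists a polynomial functor for p, i.e. a pullback-preserving endofunctor P : C → C together with natural transformations leg, wk, subst and an arrow proj satisfying axioms (P1)–(P4). -/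
open CategoryTheory CategoryTheory.Limits

universe v u

variable {C : Type u} [Category.{v} C]

/-!
Write `Σ_E p* : C/B ⥤ C` for the functor `Y ↦ Y ×_B E`. Since the forgetful functor `C/E ⥤ C` is
comonadic, the adjoint triangle theorem shows that `p*` has a right adjoint as soon as `Σ_E p*`
does. A polynomial functor for `p` is nothing but a right adjoint of `Σ_E p*`, presented
elementarily: `leg` lifts `P` to a functor `C ⥤ C/B`, `subst` is the counit, and `wk` and `proj` are
the transposes of the projections `(X × B) ×_B E ⟶ X` and `B ×_B E ⟶ E`. Conversely the unit at `Y`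
is recovered from `wk` and `proj` as a morphism into `P(Y ×_B E) = PY ×_{PB} PE`; then (P2) and (P3)
give one triangle identity and (P4) is the other.
-/

theorem comp_hom_eq_of_comp_left_eq {B : C} {Y Z W : Over B} {u : Y.left ⟶ Z.left} (g : Z ⟶ W)
    (s : Y ⟶ W) (h : u ≫ g.left = s.left) : u ≫ Z.hom = Y.hom := by
  rw [← Over.w g, reassoc_of% h, Over.w]

theorem isLeftAdjoint_comp_overForget_iff [HasBinaryProducts C] [HasEqualizers C]
    {D : Type*} [Category* D] [HasCoreflexiveEqualizers D] {E : C} (L : D ⥤ Over E) :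
    (L ⋙ Over.forget E).IsLeftAdjoint ↔ L.IsLeftAdjoint := by
  have : Comonad.PreservesLimitOfIsCoreflexivePair (Over.forget E) :=
    ⟨fun _ _ _ _ _ => inferInstance⟩
  let _ : ComonadicLeftAdjoint (Over.forget E) :=
    Comonad.comonadicOfHasPreservesCoreflexiveEqualizersOfReflectsIsomorphisms
      (Over.forgetAdjStar E)
  exact ⟨fun _ => isLeftAdjoint_triangle_lift_comonadic (Over.forget E), fun _ => inferInstance⟩

/-- The functor `Σ_E p* : C/B ⥤ C`, sending `Y` over `B` to the object `Y ×_B E` of `C`. -/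
noncomputable def pullbackDom {E B : C} (p : E ⟶ B) [HasPullbacksAlong p] : Over B ⥤ C :=
  Over.pullback p ⋙ Over.forget E

namespace pullbackDom

variable {E B : C} {p : E ⟶ B} [HasPullbacksAlong p]

variable (p) in
/-- The projection `Y ×_B E ⟶ Y`. -/
noncomputable def fst (Y : Over B) : (pullbackDom p).obj Y ⟶ Y.left :=
  pullback.fst Y.hom p

variable (p) in
/-- The projection `Y ×_B E ⟶ E`. -/
noncomputable def snd (Y : Over B) : (pullbackDom p).obj Y ⟶ E :=
  pullback.snd Y.hom p

theorem isPullback (Y : Over B) : IsPullback (fst p Y) (snd p Y) Y.hom p :=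
  IsPullback.of_hasPullback Y.hom p

theorem map_fst {Y Z : Over B} (f : Y ⟶ Z) :
    (pullbackDom p).map f ≫ fst p Z = fst p Y ≫ f.left :=
  pullback.lift_fst _ _ _

theorem map_snd {Y Z : Over B} (f : Y ⟶ Z) : (pullbackDom p).map f ≫ snd p Z = snd p Y :=
  pullback.lift_snd _ _ _

theorem eq_map {Y Z : Over B} (f : Y ⟶ Z) {u : (pullbackDom p).obj Y ⟶ (pullbackDom p).obj Z}
    (comp_fst : u ≫ fst p Z = fst p Y ≫ f.left) (comp_snd : u ≫ snd p Z = snd p Y) :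
    u = (pullbackDom p).map f :=
  (isPullback Z).hom_ext (comp_fst.trans (map_fst f).symm) (comp_snd.trans (map_snd f).symm)

end pullbackDom

section Graph

variable {B : C}

/-- The structure map of `Y`, as the morphism from `Y` to the terminal object of `C/B`. -/
def overStructure (Y : Over B) : Y ⟶ Over.mk (𝟙 B) :=
  Over.homMk Y.hom

theorem comp_overStructure {Y Z : Over B} (f : Y ⟶ Z) :
    f ≫ overStructure Z = overStructure Y :=
  Over.mkIdTerminal.hom_ext _ _

variable [HasBinaryProducts C]

/-- The graph `(id, Y.hom) : Y ⟶ Y × B` of the structure map of `Y`, as a morphism of `C/B`. -/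
noncomputable def overGraph (Y : Over B) : Y ⟶ Over.mk (prod.snd : Y.left ⨯ B ⟶ B) :=
  Over.homMk (prod.lift (𝟙 Y.left) Y.hom) (prod.lift_snd _ _)

/-- The morphism `f × B` of `C/B`. -/
noncomputable def overProdMap {X Y : C} (f : X ⟶ Y) :
    Over.mk (prod.snd : X ⨯ B ⟶ B) ⟶ Over.mk (prod.snd : Y ⨯ B ⟶ B) :=
  Over.homMk (prod.map f (𝟙 B)) (by simp)

theorem comp_overGraph {Y Z : Over B} (f : Y ⟶ Z) :
    f ≫ overGraph Z = overGraph Y ≫ overProdMap f.left := by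
  ext
  simp [overGraph, overProdMap]

variable {E : C} {p : E ⟶ B} [HasPullbacksAlong p]

theorem map_overGraph_fst (Y : Over B) :
    (pullbackDom p).map (overGraph Y) ≫ pullbackDom.fst p _ ≫ prod.fst = pullbackDom.fst p Y := by
  rw [reassoc_of% pullbackDom.map_fst]
  exact (congrArg _ (prod.lift_fst _ _)).trans (Category.comp_id _)

theorem map_overProdMap_fst {X Y : C} (f : X ⟶ Y) :
    (pullbackDom p).map (overProdMap f) ≫ pullbackDom.fst p _ ≫ prod.fst =
      (pullbackDom.fst p _ ≫ prod.fst) ≫ f := by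
  rw [reassoc_of% pullbackDom.map_fst]
  simp [overProdMap]

end Graph

section OfAdjunction

variable {E B : C} {p : E ⟶ B} [HasPullbacksAlong p] {G : C ⥤ Over B} (adj : pullbackDom p ⊣ G)

/-- The transpose of the projection `B ×_B E ⟶ E`. -/
noncomputable def projTranspose : Over.mk (𝟙 B) ⟶ G.obj E :=
  adj.homEquiv _ _ (pullbackDom.snd p _)

theorem overStructure_comp_projTranspose (Y : Over B) :
    overStructure Y ≫ projTranspose adj = adj.homEquiv Y E (pullbackDom.snd p Y) := by
  rw [projTranspose, ← adj.homEquiv_naturality_left, pullbackDom.map_snd]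

theorem map_projTranspose_comp_counit :
    (pullbackDom p).map (projTranspose adj) ≫ adj.counit.app E = pullbackDom.snd p _ :=
  (adj.homEquiv_counit _ _ _).symm.trans ((adj.homEquiv _ _).symm_apply_apply _)

variable [HasBinaryProducts C]

/-- The transpose of the projection `(X × B) ×_B E ⟶ X`. -/
noncomputable def wkTranspose (X : C) : Over.mk (prod.snd : X ⨯ B ⟶ B) ⟶ G.obj X :=
  adj.homEquiv _ _ (pullbackDom.fst p _ ≫ prod.fst)

theorem overGraph_comp_wkTranspose (Y : Over B) :
    overGraph Y ≫ wkTranspose adj Y.left = adj.homEquiv Y Y.left (pullbackDom.fst p Y) := by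
  rw [wkTranspose, ← adj.homEquiv_naturality_left, map_overGraph_fst]

theorem map_wkTranspose_comp_counit (X : C) :
    (pullbackDom p).map (wkTranspose adj X) ≫ adj.counit.app X = pullbackDom.fst p _ ≫ prod.fst :=
  (adj.homEquiv_counit _ _ _).symm.trans ((adj.homEquiv _ _).symm_apply_apply _)

theorem overProdMap_comp_wkTranspose {X Y : C} (f : X ⟶ Y) :
    overProdMap f ≫ wkTranspose adj Y = wkTranspose adj X ≫ G.map f := by
  rw [wkTranspose, wkTranspose, ← adj.homEquiv_naturality_left, ← adj.homEquiv_naturality_right,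
    map_overProdMap_fst]

theorem projTranspose_comp_map :
    projTranspose adj ≫ G.map p = overGraph (Over.mk (𝟙 B)) ≫ wkTranspose adj B :=
  calc
    projTranspose adj ≫ G.map p
      = adj.homEquiv _ _ (pullbackDom.snd p _ ≫ p) := (adj.homEquiv_naturality_right _ _).symm
    _ = adj.homEquiv _ _ (pullbackDom.fst p _) := by
      rw [← (pullbackDom.isPullback _).w]
      exact congrArg _ (Category.comp_id _)
    _ = overGraph (Over.mk (𝟙 B)) ≫ wkTranspose adj B :=
      (overGraph_comp_wkTranspose adj (Over.mk (𝟙 B))).symm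

theorem eq_unit_of_comp_map {Y : Over B} {u : Y ⟶ G.obj ((pullbackDom p).obj Y)}
    (comp_fst : u ≫ G.map (pullbackDom.fst p Y) = overGraph Y ≫ wkTranspose adj Y.left)
    (comp_snd : u ≫ G.map (pullbackDom.snd p Y) = overStructure Y ≫ projTranspose adj) :
    u = adj.unit.app Y := by
  rw [← adj.homEquiv_id, ← Equiv.symm_apply_eq]
  apply (pullbackDom.isPullback Y).hom_ext
  · rw [← adj.homEquiv_naturality_right_symm, comp_fst, overGraph_comp_wkTranspose,
      Equiv.symm_apply_apply, Category.id_comp]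
  · rw [← adj.homEquiv_naturality_right_symm, comp_snd, overStructure_comp_projTranspose,
      Equiv.symm_apply_apply, Category.id_comp]

end OfAdjunction

theorem isPolynomialFor_of_adjunction [HasFiniteLimits C] {E B : C} {p : E ⟶ B} {G : C ⥤ Over B}
    (adj : pullbackDom p ⊣ G) :
    IsPolynomialFor p (G ⋙ Over.forget B) (fun X => (G.obj X).hom)
      (fun X => (wkTranspose adj X).left) (projTranspose adj).left
      (fun X => adj.counit.app X) where
  preserves := by
    have := adj.rightAdjoint_preservesLimits
    infer_instance
  leg_natural _ _ f := Over.w (G.map f)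
  wk_natural _ _ f := congrArg CommaMorphism.left (overProdMap_comp_wkTranspose adj f)
  wk_over X := Over.w (wkTranspose adj X)
  proj_over := Over.w (projTranspose adj)
  subst_natural _ _ f _ comp_fst comp_snd := by
    rw [pullbackDom.eq_map (G.map f) comp_fst comp_snd]
    exact adj.counit.naturality f
  P1 := congrArg CommaMorphism.left (projTranspose_comp_map adj)
  P2 _ comp_fst comp_snd := by
    rw [pullbackDom.eq_map (projTranspose adj) comp_fst comp_snd]
    exact map_projTranspose_comp_counit adj
  P3 X _ comp_fst comp_snd := by
    rw [pullbackDom.eq_map (wkTranspose adj X) comp_fst comp_snd]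
    exact map_wkTranspose_comp_counit adj X
  P4 X u comp_fst comp_snd := by
    let Y := G.obj X
    have u_over : u ≫ (G.obj ((pullbackDom p).obj Y)).hom = Y.hom :=
      comp_hom_eq_of_comp_left_eq (G.map (pullbackDom.snd p Y))
        (overStructure Y ≫ projTranspose adj) comp_snd
    have u_eq_unit : Over.homMk u u_over = adj.unit.app Y :=
      eq_unit_of_comp_map adj (Over.OverMorphism.ext comp_fst) (Over.OverMorphism.ext comp_snd)
    have triangle : Over.homMk u u_over ≫ G.map (adj.counit.app X) = 𝟙 Y := by
      rw [u_eq_unit]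
      exact adj.right_triangle_components X
    exact congrArg CommaMorphism.left triangle

namespace IsPolynomialFor

variable [HasFiniteLimits C] {E B : C} {p : E ⟶ B} {P : C ⥤ C} {leg : ∀ X : C, P.obj X ⟶ B}
  {wk : ∀ X : C, X ⨯ B ⟶ P.obj X} {proj : B ⟶ P.obj E} {subst : ∀ X : C, pullback (leg X) p ⟶ X}
  (H : IsPolynomialFor p P leg wk proj subst)

/-- `P` as a functor `C ⥤ C/B`, with structure maps `leg`. -/
def toOver : C ⥤ Over B :=
  P.toOver B leg (H.leg_natural _ _)

theorem preservesLimitsOfShape_toOver : PreservesLimitsOfShape WalkingCospan H.toOver :=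
  have : PreservesLimitsOfShape WalkingCospan (H.toOver ⋙ Over.forget B) := H.preserves
  preservesLimitsOfShape_of_reflects_of_preserves H.toOver (Over.forget B)

/-- The components of `wk` as morphisms of `C/B`. -/
noncomputable def wkOver (X : C) : Over.mk (prod.snd : X ⨯ B ⟶ B) ⟶ H.toOver.obj X :=
  Over.homMk (wk X) (H.wk_over X)

theorem overProdMap_comp_wkOver {X Y : C} (f : X ⟶ Y) :
    overProdMap f ≫ H.wkOver Y = H.wkOver X ≫ H.toOver.map f :=
  Over.OverMorphism.ext (H.wk_natural X Y f)

/-- `proj` as a morphism of `C/B`. -/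
def projOver : Over.mk (𝟙 B) ⟶ H.toOver.obj E :=
  Over.homMk proj H.proj_over

theorem projOver_comp_map :
    H.projOver ≫ H.toOver.map p = overGraph (Over.mk (𝟙 B)) ≫ H.wkOver B :=
  Over.OverMorphism.ext H.P1

/-- `subst` as a natural transformation, the counit of `IsPolynomialFor.adjunction`. -/
def substNatTrans : H.toOver ⋙ pullbackDom p ⟶ 𝟭 C where
  app := subst
  naturality X Y f := H.subst_natural X Y f _ (pullbackDom.map_fst _) (pullbackDom.map_snd _)

theorem map_comp_map_comp_subst {X X' : C} {Y : Over B} (f : Y ⟶ H.toOver.obj X) (g : X ⟶ X') :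
    (pullbackDom p).map (f ≫ H.toOver.map g) ≫ H.substNatTrans.app X' =
      ((pullbackDom p).map f ≫ H.substNatTrans.app X) ≫ g := by
  rw [Functor.map_comp, Category.assoc, Category.assoc]
  exact congrArg _ (H.substNatTrans.naturality g)

theorem map_wkOver_comp_subst (X : C) :
    (pullbackDom p).map (H.wkOver X) ≫ H.substNatTrans.app X = pullbackDom.fst p _ ≫ prod.fst :=
  H.P3 X _ (pullbackDom.map_fst _) (pullbackDom.map_snd _)

theorem map_projOver_comp_subst :
    (pullbackDom p).map H.projOver ≫ H.substNatTrans.app E = pullbackDom.snd p _ :=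
  H.P2 _ (pullbackDom.map_fst _) (pullbackDom.map_snd _)

theorem isPullback_toOver_map (Y : Over B) :
    IsPullback (H.toOver.map (pullbackDom.fst p Y)) (H.toOver.map (pullbackDom.snd p Y))
      (H.toOver.map Y.hom) (H.toOver.map p) :=
  have := H.preservesLimitsOfShape_toOver
  (pullbackDom.isPullback Y).map H.toOver

theorem overGraph_comp_wkOver_comp_map (Y : Over B) :
    (overGraph Y ≫ H.wkOver Y.left) ≫ H.toOver.map Y.hom =
      (overStructure Y ≫ H.projOver) ≫ H.toOver.map p :=
  calc
    (overGraph Y ≫ H.wkOver Y.left) ≫ H.toOver.map Y.hom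
      = (overGraph Y ≫ overProdMap Y.hom) ≫ H.wkOver B := by
        rw [Category.assoc, Category.assoc, overProdMap_comp_wkOver]
    _ = (overStructure Y ≫ overGraph (Over.mk (𝟙 B))) ≫ H.wkOver B :=
        congrArg (· ≫ H.wkOver B) (comp_overGraph (overStructure Y)).symm
    _ = (overStructure Y ≫ H.projOver) ≫ H.toOver.map p := by
        rw [Category.assoc, Category.assoc, projOver_comp_map]

/-- The pairing of `wk ∘ (id, Y.hom)` and `proj ∘ Y.hom` as a morphism into
`P (Y ×_B E) ≅ P Y ×_{P B} P E`. -/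
noncomputable def unitApp (Y : Over B) : Y ⟶ H.toOver.obj ((pullbackDom p).obj Y) :=
  (H.isPullback_toOver_map Y).lift _ _ (H.overGraph_comp_wkOver_comp_map Y)

theorem unitApp_map_fst (Y : Over B) :
    H.unitApp Y ≫ H.toOver.map (pullbackDom.fst p Y) = overGraph Y ≫ H.wkOver Y.left :=
  IsPullback.lift_fst _ _ _ _

theorem unitApp_map_snd (Y : Over B) :
    H.unitApp Y ≫ H.toOver.map (pullbackDom.snd p Y) = overStructure Y ≫ H.projOver :=
  IsPullback.lift_snd _ _ _ _

theorem unitApp_naturality {Y Z : Over B} (f : Y ⟶ Z) :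
    f ≫ H.unitApp Z = H.unitApp Y ≫ H.toOver.map ((pullbackDom p).map f) := by
  apply (H.isPullback_toOver_map Z).hom_ext
  · rw [Category.assoc, Category.assoc, unitApp_map_fst, ← Functor.map_comp, pullbackDom.map_fst,
      Functor.map_comp, reassoc_of% H.unitApp_map_fst, ← overProdMap_comp_wkOver,
      reassoc_of% comp_overGraph]
  · rw [Category.assoc, Category.assoc, unitApp_map_snd, ← Functor.map_comp, pullbackDom.map_snd,
      unitApp_map_snd, reassoc_of% comp_overStructure]

theorem map_unitApp_comp_subst (Y : Over B) :
    (pullbackDom p).map (H.unitApp Y) ≫ H.substNatTrans.app _ = 𝟙 _ := by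
  apply (pullbackDom.isPullback Y).hom_ext
  · rw [← map_comp_map_comp_subst, unitApp_map_fst, Functor.map_comp, Category.assoc,
      map_wkOver_comp_subst, map_overGraph_fst, Category.id_comp]
  · rw [← map_comp_map_comp_subst, unitApp_map_snd, Functor.map_comp, Category.assoc,
      map_projOver_comp_subst, pullbackDom.map_snd, Category.id_comp]

theorem unitApp_comp_map_subst (X : C) :
    H.unitApp (H.toOver.obj X) ≫ H.toOver.map (H.substNatTrans.app X) = 𝟙 _ :=
  Over.OverMorphism.ext <| H.P4 X _
    (congrArg CommaMorphism.left (H.unitApp_map_fst _))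
    (congrArg CommaMorphism.left (H.unitApp_map_snd _))

/-- A polynomial functor for `p`, lifted to `C/B` along `leg`, is right adjoint to `Σ_E p*`. -/
noncomputable def adjunction : pullbackDom p ⊣ H.toOver where
  unit := { app := H.unitApp, naturality := fun _ _ f => H.unitApp_naturality f }
  counit := H.substNatTrans
  left_triangle_components := H.map_unitApp_comp_subst
  right_triangle_components := H.unitApp_comp_map_subst

end IsPolynomialFor

/-- For an arrow `p : E ⟶ B` in a cartesian category `C`, the following are
equivalent: (1) `p` is exponentiable, i.e. the pullback functor `p* : C/B ⥤ C/E` has a right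
adjoint; (2) there exists a polynomial functor for `p`, i.e. a pullback-preserving endofunctor
`P : C ⥤ C` together with natural transformations `leg`, `wk`, `subst` and an arrow `proj`
satisfying axioms (P1)–(P4). -/
theorem exponentiable_iff_exists_polynomialFunctor
    {C : Type u} [Category.{v} C] [HasFiniteLimits C] {E B : C} (p : E ⟶ B) :
    (Over.pullback p).IsLeftAdjoint ↔
      ∃ (P : C ⥤ C) (leg : ∀ X : C, P.obj X ⟶ B) (wk : ∀ X : C, X ⨯ B ⟶ P.obj X)
        (proj : B ⟶ P.obj E) (subst : ∀ X : C, pullback (leg X) p ⟶ X),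
        IsPolynomialFor p P leg wk proj subst := by
  rw [← isLeftAdjoint_comp_overForget_iff (Over.pullback p)]
  constructor
  · rintro ⟨G, ⟨adj⟩⟩
    exact ⟨_, _, _, _, _, isPolynomialFor_of_adjunction (p := p) adj⟩
  · rintro ⟨P, leg, wk, proj, subst, H⟩
    exact H.adjunction.isLeftAdjoint
end

section
/- Let C be a cartesian category with an object B, let D be a cartesian category, and let G, H : C/B → D be cartesian functors with a natural transformation α : G ⟹ H. If the component α at B*X (the object (π₂ : X × B → B) of C/B) is an isomorphism for every object X of C, then α is an isomorphism. In other words, precomposition with B* : C → C/B reflects isomorphisms of natural transformations between cartesian functors C/B → D. -/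
open CategoryTheory CategoryTheory.Limits

/-!
The slice `C/B` is the category of coalgebras for the comonad `B ⨯ -` on `C`, with `B*` as the
cofree functor. Every coalgebra is the equalizer of two maps between cofree ones. Between functors
preserving this equalizer, a transformation invertible at the two cofree objects is invertible at
the coalgebra itself.
-/

section

variable {E D : Type*} [Category E] [Category D] {G H : E ⥤ D}

theorem isIso_app_of_isLimit_fork (α : G ⟶ H) {Y P Q : E} {f g : P ⟶ Q} {i : Y ⟶ P}
    (w : i ≫ f = i ≫ g) (hi : IsLimit (Fork.ofι i w)) [PreservesLimit (parallelPair f g) G]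
    [Mono (H.map i)] [IsIso (α.app P)] [Mono (α.app Q)] : IsIso (α.app Y) := by
  have hGi : IsLimit (Fork.ofι (G.map i) _) := isLimitForkMapOfIsLimit G w hi
  have : Mono (G.map i) := Fork.IsLimit.mono hGi
  have equalizes : (H.map i ≫ inv (α.app P)) ≫ G.map f = (H.map i ≫ inv (α.app P)) ≫ G.map g := by
    simp only [← cancel_mono (α.app Q), Category.assoc, NatTrans.naturality,
      IsIso.inv_hom_id_assoc, ← H.map_comp, w]
  obtain ⟨β, hβ : β ≫ G.map i = H.map i ≫ inv (α.app P)⟩ := Fork.IsLimit.lift' hGi _ equalizes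
  refine ⟨β, ?_, ?_⟩
  · rw [← cancel_mono (G.map i), Category.assoc, hβ, ← NatTrans.naturality_assoc,
      IsIso.hom_inv_id, Category.comp_id, Category.id_comp]
  · rw [← cancel_mono (H.map i), Category.assoc, ← NatTrans.naturality, reassoc_of% hβ,
      IsIso.inv_hom_id, Category.comp_id, Category.id_comp]

theorem isIso_of_isIso_whiskerLeft_of_essSurj {A : Type*} [Category A] (F : A ⥤ E) [F.EssSurj]
    (α : G ⟶ H) [IsIso (F.whiskerLeft α)] : IsIso α := by
  refine (NatTrans.isIso_iff_isIso_app α).mpr fun Y => ?_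
  rw [← NatTrans.isIso_app_iff_of_iso α (F.objObjPreimageIso Y)]
  exact inferInstanceAs (IsIso ((F.whiskerLeft α).app _))

end

section

variable {C D : Type*} [Category C] [Category D]

theorem isIso_of_isIso_whiskerLeft_cofree {T : Comonad C} {G H : T.Coalgebra ⥤ D}
    [PreservesLimitsOfShape WalkingParallelPair G] [H.PreservesMonomorphisms] (α : G ⟶ H)
    [IsIso (T.cofree.whiskerLeft α)] : IsIso α := by
  have isIso_app_cofree (X : C) : IsIso (α.app (T.cofree.obj X)) :=
    inferInstanceAs (IsIso ((T.cofree.whiskerLeft α).app X))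
  refine (NatTrans.isIso_iff_isIso_app α).mpr fun Y => ?_
  have : Mono (Comonad.CofreeEqualizer.ι Y) :=
    Fork.IsLimit.mono (Comonad.beckCoalgebraEqualizer Y)
  exact isIso_app_of_isLimit_fork α (Comonad.CofreeEqualizer.condition Y)
    (Comonad.beckCoalgebraEqualizer Y)

variable [HasBinaryProducts C] (B : C)

theorem isIso_of_isIso_whiskerLeft_star {G H : Over B ⥤ D}
    [PreservesLimitsOfShape WalkingParallelPair G] [H.PreservesMonomorphisms] (α : G ⟶ H)
    [IsIso ((Over.star B).whiskerLeft α)] : IsIso α := by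
  have : (coalgebraToOver B).IsEquivalence := (coalgebraEquivOver B).isEquivalence_functor
  have : IsIso ((prodComonad B).cofree.whiskerLeft ((coalgebraToOver B).whiskerLeft α)) :=
    inferInstanceAs (IsIso ((Over.star B).whiskerLeft α))
  have : IsIso ((coalgebraToOver B).whiskerLeft α) := isIso_of_isIso_whiskerLeft_cofree _
  exact isIso_of_isIso_whiskerLeft_of_essSurj (coalgebraToOver B) α

/-- The isomorphism between Mathlib's `B*`, whose value at `X` is `π₁ : B ⨯ X ⟶ B`, and the
version with the factors swapped. -/
noncomputable def overStarObjIso (X : C) :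
    (Over.star B).obj X ≅ Over.mk (prod.snd : X ⨯ B ⟶ B) :=
  Over.isoMk (prod.braiding B X) ((prod.lift_snd _ _).trans (prod.lift_fst _ _).symm)

theorem natTrans_isIso_of_isIso_on_star_general (G H : Over B ⥤ D)
    [PreservesLimitsOfShape WalkingParallelPair G] [H.PreservesMonomorphisms] (α : G ⟶ H)
    (hα : ∀ X : C, IsIso (α.app (Over.mk (prod.snd : X ⨯ B ⟶ B)))) : IsIso α := by
  have : IsIso ((Over.star B).whiskerLeft α) :=
    (NatTrans.isIso_iff_isIso_app _).mpr fun X =>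
      (NatTrans.isIso_app_iff_of_iso α (overStarObjIso B X)).mpr (hα X)
  exact isIso_of_isIso_whiskerLeft_star B α

end

/-- **Statement 11.** Let `C` be a cartesian category with an object `B`, let `D` be a
cartesian category, and let `G, H : C/B ⥤ D` be cartesian (finite-limit-preserving) functors
with a natural transformation `α : G ⟹ H`.  If the component of `α` at `B* X` — the object
`(π₂ : X × B → B)` of `C/B` — is an isomorphism for every object `X` of `C`, then `α` is an
isomorphism.  In other words, precomposition with `B* : C ⥤ C/B` reflects isomorphisms of
natural transformations between cartesian functors `C/B ⥤ D`. -/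
theorem natTrans_isIso_of_isIso_on_star
    {C : Type*} [Category C] [HasFiniteLimits C] (B : C)
    {D : Type*} [Category D] [HasFiniteLimits D]
    (G H : Over B ⥤ D) [PreservesFiniteLimits G] [PreservesFiniteLimits H]
    (α : G ⟶ H)
    (hα : ∀ X : C, IsIso (α.app (Over.mk (prod.snd : X ⨯ B ⟶ B)))) :
    IsIso α :=
  natTrans_isIso_of_isIso_on_star_general B G H α hα
end
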